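/- Let (G,I,O) be an open graph with focused gFlow (g,≺), and let u ∉ I ∪ O. Then Odd_{G⋆u}({u} Δ g(u)) ∩ (V ∖ (O ∪ {u})) = R_u, where R_u := N_G(u) ∩ g(u) ∩ (V ∖ O). -/

import Mathlib

open Finset symmDiff

variable {V : Type*}

/-- The neighbourhood of a vertex as a `Finset`. -/
def nbhd [Fintype V] [DecidableEq V] (G : SimpleGraph V) [DecidableRel G.Adj] (v : V) :
    Finset V :=
  Finset.univ.filter (G.Adj v)

/-- The odd neighbourhood of a set of vertices: all vertices with an odd number of
neighbours in `A`. -/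
def oddNbhd [Fintype V] [DecidableEq V] (G : SimpleGraph V) [DecidableRel G.Adj]
    (A : Finset V) : Finset V :=
  Finset.univ.filter fun w => Odd (A.filter (G.Adj w)).card

/-- Local complementation of `G` at the vertex `u`. -/
def localComp (G : SimpleGraph V) (u : V) : SimpleGraph V where
  Adj v w := v ≠ w ∧ Xor' (G.Adj v w) (G.Adj u v ∧ G.Adj u w)
  symm := by
    constructor
    rintro v w ⟨h1, h2⟩
    exact ⟨h1.symm, by rwa [G.adj_comm v w, and_comm] at h2⟩
  loopless := by constructor; rintro v ⟨h, -⟩; exact h rfl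

instance {a b : Prop} [Decidable a] [Decidable b] : Decidable (Xor' a b) :=
  inferInstanceAs (Decidable ((a ∧ ¬b) ∨ (b ∧ ¬a)))

instance [DecidableEq V] (G : SimpleGraph V) [DecidableRel G.Adj] (u : V) :
    DecidableRel (localComp G u).Adj :=
  fun v w => inferInstanceAs (Decidable (v ≠ w ∧ Xor' (G.Adj v w) (G.Adj u v ∧ G.Adj u w)))

/-- The pivot of `G` along the edge `uv`. -/
def pivot (G : SimpleGraph V) (u v : V) : SimpleGraph V :=
  localComp (localComp (localComp G u) v) u

instance [DecidableEq V] (G : SimpleGraph V) [DecidableRel G.Adj] (u v : V) :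
    DecidableRel (pivot G u v).Adj :=
  inferInstanceAs (DecidableRel (localComp (localComp (localComp G u) v) u).Adj)

instance {α β : Type*} (G : SimpleGraph β) [DecidableRel G.Adj] (f : α → β) :
    DecidableRel (G.comap f).Adj :=
  fun a b => inferInstanceAs (Decidable (G.Adj (f a) (f b)))

/-- `(g, r)` is a focused gFlow on the open graph `(G, I, O)`: `r` is a strict partial
order, each correction set `g u` (for `u ∉ O`) avoids the inputs, its odd neighbourhood
meets the non-outputs exactly in `{u}`, and `g u` lies strictly in the future of `u`. -/
def IsFocusedGFlow [Fintype V] [DecidableEq V] (G : SimpleGraph V) [DecidableRel G.Adj]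
    (I O : Finset V) (g : V → Finset V) (r : V → V → Prop) : Prop :=
  (∀ a, ¬ r a a) ∧ (∀ a b c, r a b → r b c → r a c) ∧
    ∀ u ∉ O, g u ∩ I = ∅ ∧ oddNbhd G (g u) \ O = {u} ∧ ∀ v ∈ g u, r u v

/-- The open graph `(G, I, O)` admits a focused gFlow. -/
def HasFocusedGFlow [Fintype V] [DecidableEq V] (G : SimpleGraph V) [DecidableRel G.Adj]
    (I O : Finset V) : Prop :=
  ∃ g r, IsFocusedGFlow G I O g r

/-!
The neighbourhood of a vertex `w` is unchanged by local complementation at `u` unless `w` is a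
neighbour of `u`, in which case it becomes `N(w) ∆ N(u) ∆ {w}`. As the parity of a cardinality is
additive under `∆`, the parity of the number of neighbours in `A` then changes at `w` by
`[u ∈ Odd(A)] + [w ∈ A]`. Adding `u` itself to `A` changes `Odd(A)` by `N(u)`, so for `u ∈ Odd(A)`
all contributions of the full set `N(u)` cancel and
`Odd_{G⋆u}({u} ∆ A) = Odd_G(A) ∆ (N(u) ∩ A)`. If `A` is a correction set of `u` in a focused gFlow,
the first term vanishes outside `O ∪ {u}`.
-/

section Parity

variable {α : Type*} [DecidableEq α]

theorem odd_card_symmDiff_iff (s t : Finset α) :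
    Odd #(s ∆ t) ↔ Xor (Odd #s) (Odd #t) := by
  have card_add : #(s ∆ t) + 2 * #(s ∩ t) = #s + #t := by
    have hunion : #(s ∆ t) = #(s \ t) + #(t \ s) := card_union_of_disjoint disjoint_sdiff_sdiff
    have hs := card_sdiff_add_card_inter s t
    have ht := card_sdiff_add_card_inter t s
    rw [inter_comm t s] at ht
    lia
  rw [xor_iff_not_iff]
  grind

theorem odd_card_symmDiff_inter_iff (s t a : Finset α) :
    Odd #(s ∆ t ∩ a) ↔ Xor (Odd #(s ∩ a)) (Odd #(t ∩ a)) := by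
  rw [← odd_card_symmDiff_iff, ← inf_eq_inter, inf_symmDiff_distrib_right, inf_eq_inter,
    inf_eq_inter]

theorem odd_card_singleton_inter_iff (x : α) (a : Finset α) : Odd #({x} ∩ a) ↔ x ∈ a := by
  by_cases hx : x ∈ a <;> simp [hx]

end Parity

theorem localComp_adj {G : SimpleGraph V} {u v w : V} :
    (localComp G u).Adj v w ↔ v ≠ w ∧ Xor (G.Adj v w) (G.Adj u v ∧ G.Adj u w) :=
  Iff.rfl

section OddNeighbourhood

variable [Fintype V] [DecidableEq V] {G : SimpleGraph V} [DecidableRel G.Adj]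
  {u v w : V} {A O : Finset V}

theorem mem_nbhd : w ∈ nbhd G v ↔ G.Adj v w := by
  simp [nbhd]

theorem self_notMem_nbhd : u ∉ nbhd G u := by
  simp [mem_nbhd]

theorem mem_oddNbhd : w ∈ oddNbhd G A ↔ Odd #(nbhd G w ∩ A) := by
  simp [oddNbhd, nbhd, filter_inter]

theorem oddNbhd_singleton (G : SimpleGraph V) [DecidableRel G.Adj] (u : V) :
    oddNbhd G {u} = nbhd G u := by
  ext w
  rw [mem_oddNbhd, inter_comm, odd_card_singleton_inter_iff, mem_nbhd, mem_nbhd, G.adj_comm]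

theorem oddNbhd_symmDiff (G : SimpleGraph V) [DecidableRel G.Adj] (A B : Finset V) :
    oddNbhd G (A ∆ B) = oddNbhd G A ∆ oddNbhd G B := by
  ext w
  simp only [mem_symmDiff, mem_oddNbhd, inter_comm (nbhd G w)]
  exact odd_card_symmDiff_inter_iff A B (nbhd G w)

theorem nbhd_localComp_of_adj (h : G.Adj u w) :
    nbhd (localComp G u) w = (nbhd G w ∆ nbhd G u) ∆ {w} := by
  ext x
  by_cases hx : x = w
  · simp [hx, mem_symmDiff, mem_nbhd, h]
  · simp [mem_symmDiff, mem_nbhd, localComp_adj, h, hx, Ne.symm hx, Xor]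

theorem nbhd_localComp_of_not_adj (h : ¬G.Adj u w) : nbhd (localComp G u) w = nbhd G w := by
  ext x
  simpa [mem_nbhd, localComp_adj, h, Xor] using fun hwx : G.Adj w x => hwx.ne

theorem mem_oddNbhd_localComp_of_adj (h : G.Adj u w) :
    w ∈ oddNbhd (localComp G u) A ↔
      Xor (Xor (w ∈ oddNbhd G A) (u ∈ oddNbhd G A)) (w ∈ A) := by
  simp only [mem_oddNbhd, nbhd_localComp_of_adj h, odd_card_symmDiff_inter_iff,
    odd_card_singleton_inter_iff]

theorem mem_oddNbhd_localComp_of_not_adj (h : ¬G.Adj u w) :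
    w ∈ oddNbhd (localComp G u) A ↔ w ∈ oddNbhd G A := by
  rw [mem_oddNbhd, nbhd_localComp_of_not_adj h, mem_oddNbhd]

theorem oddNbhd_localComp_of_mem (hu : u ∈ oddNbhd G A) :
    oddNbhd (localComp G u) A = oddNbhd G A ∆ (nbhd G u \ A) := by
  ext w
  rw [mem_symmDiff, mem_sdiff, mem_nbhd]
  by_cases h : G.Adj u w
  · rw [mem_oddNbhd_localComp_of_adj h]
    grind [Xor]
  · simp [mem_oddNbhd_localComp_of_not_adj h, h]

theorem oddNbhd_localComp_singleton_symmDiff (hu : u ∈ oddNbhd G A) :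
    oddNbhd (localComp G u) ({u} ∆ A) = oddNbhd G A ∆ (nbhd G u ∩ A) := by
  have huu : u ∉ nbhd G u := self_notMem_nbhd
  have hodd : oddNbhd G ({u} ∆ A) = nbhd G u ∆ oddNbhd G A := by
    rw [oddNbhd_symmDiff, oddNbhd_singleton]
  have hmem : u ∈ oddNbhd G ({u} ∆ A) := by simp [hodd, mem_symmDiff, huu, hu]
  have hsdiff : nbhd G u \ ({u} ∆ A) = nbhd G u \ A := by grind [mem_symmDiff]
  calc oddNbhd (localComp G u) ({u} ∆ A)
      = (nbhd G u ∆ oddNbhd G A) ∆ (nbhd G u \ A) := by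
        rw [oddNbhd_localComp_of_mem hmem, hodd, hsdiff]
    _ = oddNbhd G A ∆ (nbhd G u ∆ (nbhd G u \ A)) := by
        rw [symmDiff_comm (nbhd G u), symmDiff_assoc]
    _ = oddNbhd G A ∆ (nbhd G u ∩ A) := by
        rw [symmDiff_of_ge (sdiff_subset : nbhd G u \ A ⊆ nbhd G u), _root_.sdiff_sdiff_right_self,
          inf_eq_inter]

theorem oddNbhd_localComp_correction_self_general (hA : oddNbhd G A \ O = {u}) :
    oddNbhd (localComp G u) ({u} ∆ A) \ (O ∪ {u}) = (nbhd G u ∩ A) \ O := by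
  have hu : u ∈ oddNbhd G A := (mem_sdiff.mp (hA ▸ mem_singleton_self u)).1
  have hodd : oddNbhd G A \ (O ∪ {u}) = ∅ := by
    rw [← sup_eq_union, ← sdiff_sdiff_left, hA, Finset.sdiff_self]
  have huu : u ∉ nbhd G u := self_notMem_nbhd
  calc oddNbhd (localComp G u) ({u} ∆ A) \ (O ∪ {u})
      = (oddNbhd G A \ (O ∪ {u})) ∆ ((nbhd G u ∩ A) \ (O ∪ {u})) := by
        rw [oddNbhd_localComp_singleton_symmDiff hu]
        grind [mem_symmDiff]
    _ = (nbhd G u ∩ A) \ (O ∪ {u}) := by rw [hodd, ← bot_eq_empty, bot_symmDiff]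
    _ = (nbhd G u ∩ A) \ O := by grind

theorem IsFocusedGFlow.oddNbhd_sdiff_outputs {I : Finset V} {g : V → Finset V}
    {r : V → V → Prop} (hg : IsFocusedGFlow G I O g r) (hu : u ∉ O) :
    oddNbhd G (g u) \ O = {u} :=
  (hg.2.2 u hu).2.1

end OddNeighbourhood

theorem oddNbhd_localComp_correction_self [Fintype V] [DecidableEq V]
    (G : SimpleGraph V) [DecidableRel G.Adj] (I O : Finset V)
    (g : V → Finset V) (r : V → V → Prop) (hg : IsFocusedGFlow G I O g r)
    (u : V) (hu : u ∉ I ∪ O) :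
    oddNbhd (localComp G u) (({u} : Finset V) ∆ g u) \ (O ∪ {u}) =
      (nbhd G u ∩ g u) \ O :=
  oddNbhd_localComp_correction_self_general (hg.oddNbhd_sdiff_outputs (notMem_union.mp hu).2)
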